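/- Let Q be a commutative, integral quantale and (X,α) a symmetric Q-category. Let L X := {μ : X → Q | (∀ x y, μ y * α x y ≤ μ x) ∧ (∀ x y, μ x * μ y ≤ α x y)} and equip L X with the symmetrized hom σₛ μ λ := (⨅ x, (μ x ⇨ λ x)) ⊓ (⨅ x, (λ x ⇨ μ x)). Then there exists a map m : L X → T X such that: (i) σₛ μ λ ≤ σ (m μ) (m λ) for all μ, λ ∈ L X (m is a Q-functor); (ii) m μ = μ whenever μ ∈ T X; and (iii) μ x ≤ (m μ) x for all μ ∈ L X and x ∈ X. -/

import Mathlib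

/-!
The retraction is obtained by Zorn's lemma, as in the construction by Dress of the tight span
of a metric space. Call `f : X → Q` subtight if `f x * f y ≤ α x y` for all `x, y`; elements of
`L X` and of `T X` are subtight. Consider the operators `m` on `X → Q` which are inflationary,
functorial for the symmetrized hom, and preserve subtight functions (`IsExpansion`). Along a
nonempty chain of such operators the pointwise supremum is again one (`IsExpansion.sSup`), so there
is a maximal `m`.

For a fixed point `x`, raising the value of `f` at `x` to the largest value compatible with
subtightness, namely `⨅ y, (f y ⇨ α x y)`, is functorial for the symmetrized hom and preserves
subtightness, since `α x x = ⊤` imposes no constraint of the new value against itself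
(`IsExpansion.bump`). By maximality, this operation leaves each `m f` with `f` subtight unchanged
for every `x`, which says exactly that `m f` is in the tight span. Finally, an element of `T X` is
maximal among subtight functions, hence fixed by the inflationary operator `m`.
-/


/-- The residuation `p ⇨ r` of a quantale, right adjoint to multiplication:
`p * q ≤ r ↔ q ≤ qimp p r`. -/
def qimp {Q : Type*} [CompleteLattice Q] [Mul Q] (p r : Q) : Q :=
  sSup {q | p * q ≤ r}

/-- The tight span of a symmetric Q-category `(X, α)`. -/
def tightSpan {Q X : Type*} [CompleteLattice Q] [Mul Q] (α : X → X → Q) :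
    Set (X → Q) :=
  {μ | ∀ x, μ x = ⨅ y, qimp (μ y) (α x y)}

/-- The hom of the tight span: `σ μ λ = ⨅ x, (μ x ⇨ λ x)`. -/
def tsHom {Q X : Type*} [CompleteLattice Q] [Mul Q] (μ lam : X → Q) : Q :=
  ⨅ x, qimp (μ x) (lam x)

/-- The ambient set `L X` of presheaves `μ` with `μ ∘ μ° ≤ 1_X`. -/
def LSet {Q X : Type*} [CompleteLattice Q] [Mul Q] (α : X → X → Q) :
    Set (X → Q) :=
  {μ | (∀ x y, μ y * α x y ≤ μ x) ∧ (∀ x y, μ x * μ y ≤ α x y)}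

/-- The symmetrized hom on `L X`. -/
def tsHomSym {Q X : Type*} [CompleteLattice Q] [Mul Q] (μ lam : X → Q) : Q :=
  tsHom μ lam ⊓ tsHom lam μ

section Quantale

variable {Q X : Type*} [CompleteLattice Q] [CommMonoid Q] [IsQuantale Q]

lemma le_qimp_iff {p q r : Q} : q ≤ qimp p r ↔ p * q ≤ r :=
  Quantale.rightMulResiduation_le_iff_mul_le

lemma le_tsHom_iff {s : Q} {f g : X → Q} : s ≤ tsHom f g ↔ ∀ x, f x * s ≤ g x := by
  simp [tsHom, le_qimp_iff]

lemma tsHomSym_comm (f g : X → Q) : tsHomSym f g = tsHomSym g f := inf_comm _ _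

/-- The largest value at `x` compatible with all the constraints `f y * _ ≤ α x y`. -/
def conjAt (α : X → X → Q) (f : X → Q) (x : X) : Q := ⨅ y, qimp (f y) (α x y)

lemma le_conjAt_iff {α : X → X → Q} {f : X → Q} {x : X} {q : Q} :
    q ≤ conjAt α f x ↔ ∀ y, f y * q ≤ α x y := by
  simp [conjAt, le_qimp_iff]

/-- Subtight functions: the second of the two conditions defining `LSet`. -/
def Subtight (α : X → X → Q) (f : X → Q) : Prop := ∀ x y, f x * f y ≤ α x y

lemma Subtight.le_conjAt {α : X → X → Q} {f : X → Q} (hf : Subtight α f) (x : X) :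
    f x ≤ conjAt α f x :=
  le_conjAt_iff.2 fun y => mul_comm (f x) (f y) ▸ hf x y

lemma subtight_of_mem_tightSpan {α : X → X → Q} {f : X → Q} (hf : f ∈ tightSpan α) :
    Subtight α f := fun x y =>
  mul_comm (f y) (f x) ▸ le_conjAt_iff.1 (hf x).le y

/-- Inflationary operators on `X → Q` which are functorial for the symmetrized hom and preserve
subtightness. -/
structure IsExpansion (α : X → X → Q) (m : (X → Q) → X → Q) : Prop where
  le : ∀ f, f ≤ m f
  hom : ∀ f g x, m f x * tsHomSym f g ≤ m g x
  subtight : ∀ f, Subtight α f → Subtight α (m f)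

lemma isExpansion_id (α : X → X → Q) : IsExpansion α id where
  le _ := le_rfl
  hom f g := le_tsHom_iff.1 (inf_le_left : tsHomSym f g ≤ tsHom f g)
  subtight _ hf := hf

lemma IsExpansion.sSup {α : X → X → Q} {c : Set ((X → Q) → X → Q)}
    (hc : ∀ m ∈ c, IsExpansion α m) (hchain : IsChain (· ≤ ·) c) (hne : c.Nonempty) :
    IsExpansion α (fun f x => ⨆ m : c, m.1 f x) where
  le f x := by
    obtain ⟨m, hm⟩ := hne
    exact le_iSup_of_le (⟨m, hm⟩ : c) ((hc m hm).le f x)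
  hom f g x := by
    rw [Quantale.iSup_mul_distrib]
    exact iSup_le fun m => le_iSup_of_le m ((hc m.1 m.2).hom f g x)
  subtight f hf x y := by
    simp only [Quantale.iSup_mul_distrib, Quantale.mul_iSup_distrib]
    refine iSup_le fun n => iSup_le fun m => ?_
    -- The two factors are bounded by the values of the larger of the two operators.
    rcases hchain.total m.2 n.2 with h | h
    · exact (mul_le_mul_left (h f x) _).trans ((hc n.1 n.2).subtight f hf x y)
    · exact (mul_le_mul_right (h f y) _).trans ((hc m.1 m.2).subtight f hf x y)

open Classical in
/-- Raise the value of `f` at `x` to at least `conjAt α f x`. Taking the join with `f x` makes the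
operation inflationary on all functions; for subtight `f` the new value is `conjAt α f x`. -/
noncomputable def bump (α : X → X → Q) (x : X) (f : X → Q) : X → Q :=
  Function.update f x (f x ⊔ conjAt α f x)

lemma le_bump (α : X → X → Q) (x : X) (f : X → Q) : f ≤ bump α x f := by
  simp [bump]

lemma Subtight.bump {α : X → X → Q} (htop : ∀ x, α x x = ⊤) (hsym : ∀ x y, α x y = α y x)
    {f : X → Q} (hf : Subtight α f) (x : X) : Subtight α (bump α x f) := by
  have key : ∀ y, f y * conjAt α f x ≤ α x y := le_conjAt_iff.1 le_rfl
  intro y z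
  simp only [_root_.bump, sup_eq_right.2 (hf.le_conjAt x)]
  by_cases hy : y = x <;> by_cases hz : z = x
  · subst hy; subst hz
    simp [htop]
  · subst hy
    simpa [hz, mul_comm] using key z
  · subst hz
    simpa [hy, hsym y] using key y
  · simpa [hy, hz] using hf y z

lemma conjAt_mul_le {α : X → X → Q} {f g : X → Q} {s : Q} (h : ∀ x, g x * s ≤ f x) (x : X) :
    conjAt α f x * s ≤ conjAt α g x := by
  refine le_conjAt_iff.2 fun y => ?_
  calc g y * (conjAt α f x * s) = g y * s * conjAt α f x := by
        rw [mul_assoc, mul_comm s]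
    _ ≤ f y * conjAt α f x := mul_le_mul_left (h y) _
    _ ≤ α x y := le_conjAt_iff.1 le_rfl y

lemma bump_mul_le {α : X → X → Q} {f g : X → Q} {s : Q} (h : ∀ x, f x * s ≤ g x)
    (h' : ∀ x, g x * s ≤ f x) (x y : X) : bump α x f y * s ≤ bump α x g y := by
  by_cases hy : y = x
  · subst hy
    simp only [bump, Function.update_self, Quantale.sup_mul_distrib]
    exact sup_le_sup (h y) (conjAt_mul_le h' y)
  · simpa [bump, hy] using h y

lemma IsExpansion.bump {α : X → X → Q} (htop : ∀ x, α x x = ⊤) (hsym : ∀ x y, α x y = α y x)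
    {m : (X → Q) → X → Q} (hm : IsExpansion α m) (x : X) :
    IsExpansion α (fun f => bump α x (m f)) where
  le f := (hm.le f).trans (le_bump α x _)
  hom f g := bump_mul_le (hm.hom f g) (fun y => tsHomSym_comm g f ▸ hm.hom g f y) x
  subtight f hf := (hm.subtight f hf).bump htop hsym x

end Quantale

/-- the tight span `T X` is a retract of the symmetrization of `L X`. -/
theorem tightSpan_retract_of_LSet
    {Q : Type*} [CompleteLattice Q] [CommMonoid Q] [IsQuantale Q]
    (hint : (⊤ : Q) = 1)
    {X : Type*} (α : X → X → Q)
    (hα1 : ∀ x, α x x = 1)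
    (hαsym : ∀ x y, α x y = α y x)
    (hαtrans : ∀ x y z, α y z * α x y ≤ α x z) :
    ∃ m : (X → Q) → (X → Q),
      (∀ μ ∈ LSet α, m μ ∈ tightSpan α) ∧
      (∀ μ ∈ LSet α, ∀ lam ∈ LSet α, tsHomSym μ lam ≤ tsHom (m μ) (m lam)) ∧
      (∀ μ ∈ tightSpan α, m μ = μ) ∧
      (∀ μ ∈ LSet α, ∀ x, μ x ≤ m μ x) := by
  have htop : ∀ x, α x x = ⊤ := fun x => (hα1 x).trans hint.symm
  obtain ⟨m, -, hmax⟩ := zorn_le_nonempty₀ {m | IsExpansion α m}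
    (fun c hc hchain n hn => ⟨_, IsExpansion.sSup hc hchain ⟨n, hn⟩,
      fun k hk f x => le_iSup (fun m : c => m.1 f x) ⟨k, hk⟩⟩) id (isExpansion_id α)
  have hm : IsExpansion α m := hmax.prop
  have hconj : ∀ f x, conjAt α (m f) x ≤ m f x := fun f x => by
    have h := hmax.le_of_ge (hm.bump htop hαsym x) (fun f => le_bump α x (m f)) f x
    simp only [bump, Function.update_self] at h
    exact le_sup_right.trans h
  refine ⟨m, fun f hf x => ?_, fun f _ g _ => le_tsHom_iff.2 (hm.hom f g), fun f hf => ?_,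
    fun f _ => hm.le f⟩
  · exact le_antisymm ((hm.subtight f hf.2).le_conjAt x) (hconj f x)
  · refine le_antisymm (fun x => ?_) (hm.le f)
    -- Passing to conjugates reverses the order, so `m f ≤ conj (m f) ≤ conj f = f`.
    rw [hf x]
    exact le_conjAt_iff.2 fun y => (mul_le_mul_left (hm.le f y) _).trans
      (mul_comm (m f x) (m f y) ▸ hm.subtight f (subtight_of_mem_tightSpan hf) x y)
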